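/- arXiv:1712.00495 — 2 statements merged into one kernel-verified Lean document; each statement's English description precedes it below -/
import Mathlib

section
/- Let D be a digraph with diachromatic number k. Then D is k-minimal (i.e., dac(D − f) < k for every arc f of D) if and only if D has exactly k(k−1) arcs. -/
/-- The subset `S` of vertices induces an acyclic subdigraph of the digraph with
arc relation `A` (i.e. there is no directed cycle all of whose vertices lie in `S`). -/
def AcyclicSet {V : Type*} (A : V → V → Prop) (S : Set V) : Prop :=
  ∀ v : V, ¬ Relation.TransGen (fun x y => x ∈ S ∧ y ∈ S ∧ A x y) v v

/-- `c` is an acyclic vertex coloring of the digraph `A` with `k` colors: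
`c` is surjective and every chromatic class induces an acyclic subdigraph. -/
def IsAcyclicColoring {V : Type*} (A : V → V → Prop) {k : ℕ} (c : V → Fin k) : Prop :=
  Function.Surjective c ∧ ∀ i : Fin k, AcyclicSet A {v | c v = i}

/-- `c` is a complete vertex coloring of the digraph `A` with `k` colors:
`c` is surjective and for every ordered pair of distinct colors `(i, j)` there is
an arc `(u, v)` with `c u = i` and `c v = j`. -/
def IsCompleteColoring {V : Type*} (A : V → V → Prop) {k : ℕ} (c : V → Fin k) : Prop :=
  Function.Surjective c ∧
    ∀ i j : Fin k, i ≠ j → ∃ u v : V, A u v ∧ c u = i ∧ c v = j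

/-- The diachromatic number: the largest `k` admitting a complete acyclic `k`-coloring. -/
noncomputable def dac {V : Type*} (A : V → V → Prop) : ℕ :=
  sSup {k | ∃ c : V → Fin k, IsAcyclicColoring A c ∧ IsCompleteColoring A c}

/-- The dichromatic number: the smallest `k` admitting an acyclic `k`-coloring. -/
noncomputable def dc {V : Type*} (A : V → V → Prop) : ℕ :=
  sInf {k | ∃ c : V → Fin k, IsAcyclicColoring A c}

/-- The pseudoachromatic number: the largest `k` admitting a complete `k`-coloring. -/
noncomputable def psi {V : Type*} (A : V → V → Prop) : ℕ :=
  sSup {k | ∃ c : V → Fin k, IsCompleteColoring A c}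

/-- `A` is a tournament: no loops, and for distinct vertices exactly one of the
two possible arcs is present. -/
def IsTournament {V : Type*} (A : V → V → Prop) : Prop :=
  (∀ v : V, ¬ A v v) ∧ ∀ u v : V, u ≠ v → (A u v ↔ ¬ A v u)

/-!
A complete coloring with `k` colors picks out one arc for each of the `k (k - 1)` ordered pairs of
distinct colors. The picked arcs are distinct, and they alone keep the coloring complete, while
acyclicity survives any deletion of arcs. Hence `D` contains `k (k - 1)` arcs, where `k = dac D`,
such that deleting arcs other than these does not decrease the diachromatic number. If `D` is
`k`-minimal there are no other arcs. Conversely, a digraph with fewer than `k (k - 1)` arcs has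
diachromatic number less than `k`.
-/

section ArcDeletion

variable {V : Type*}

/-- The set of arcs of the digraph with arc relation `A`, whose cardinality is the size of the
digraph. -/
def arcSet (A : V → V → Prop) : Set (V × V) := {p | A p.1 p.2}

/-- The digraph `D - f` obtained from the digraph `D` with arc relation `A` by deleting the arc
`f = (u, v)`. -/
def deleteArc (A : V → V → Prop) (u v : V) : V → V → Prop :=
  fun x y => A x y ∧ ¬(x = u ∧ y = v)

variable {A B : V → V → Prop} {u v : V}

theorem arcSet_mono (hBA : B ≤ A) : arcSet B ⊆ arcSet A :=
  fun p => hBA p.1 p.2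

theorem deleteArc_le : deleteArc A u v ≤ A :=
  fun _ _ h => h.1

theorem le_deleteArc (hBA : B ≤ A) (huv : ¬B u v) : B ≤ deleteArc A u v := by
  refine fun x y hxy => ⟨hBA x y hxy, ?_⟩
  rintro ⟨rfl, rfl⟩
  exact huv hxy

theorem arcSet_deleteArc : arcSet (deleteArc A u v) = arcSet A \ {(u, v)} := by
  ext p
  simp only [arcSet, deleteArc, Set.mem_ofPred_eq, Set.mem_sdiff, Set.mem_singleton_iff,
    Prod.ext_iff]

theorem ncard_arcSet_deleteArc_lt (hA : (arcSet A).Finite) (huv : A u v) :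
    (arcSet (deleteArc A u v)).ncard < (arcSet A).ncard := by
  rw [arcSet_deleteArc]
  exact Set.ncard_sdiff_singleton_lt_of_mem (a := (u, v)) huv hA

end ArcDeletion

section Coloring

variable {V : Type*} {A B : V → V → Prop} {k : ℕ} {c : V → Fin k}

theorem AcyclicSet.anti {S : Set V} (hS : AcyclicSet A S) (hBA : B ≤ A) : AcyclicSet B S :=
  fun v hv => hS v <| hv.lift id fun _ _ h => ⟨h.1, h.2.1, hBA _ _ h.2.2⟩

theorem IsAcyclicColoring.anti (hc : IsAcyclicColoring A c) (hBA : B ≤ A) :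
    IsAcyclicColoring B c :=
  ⟨hc.1, fun i => (hc.2 i).anti hBA⟩

theorem isCompleteColoring_iff_surjOn :
    IsCompleteColoring A c ↔
      Function.Surjective c ∧
        Set.SurjOn (Prod.map c c) (arcSet A) (Set.univ : Set (Fin k)).offDiag := by
  simp [IsCompleteColoring, Set.SurjOn, Set.subset_def, arcSet]

theorem IsCompleteColoring.mono (hc : IsCompleteColoring B c) (hBA : B ≤ A) :
    IsCompleteColoring A c := by
  rw [isCompleteColoring_iff_surjOn] at hc ⊢
  exact ⟨hc.1, hc.2.mono (arcSet_mono hBA) subset_rfl⟩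

theorem ncard_offDiag_univ_fin (k : ℕ) :
    (Set.univ : Set (Fin k)).offDiag.ncard = k * (k - 1) := by
  rw [← Finset.coe_univ, ← Finset.coe_offDiag, Set.ncard_coe_finset, Finset.offDiag_card,
    Finset.card_fin, Nat.mul_sub_one]

theorem IsCompleteColoring.exists_le_ncard_arcSet_eq (hc : IsCompleteColoring A c) :
    ∃ B ≤ A, IsCompleteColoring B c ∧ (arcSet B).ncard = k * (k - 1) := by
  obtain ⟨hsurj, hpairs⟩ := isCompleteColoring_iff_surjOn.mp hc
  obtain ⟨F, hFA, hF⟩ := hpairs.exists_bijOn_subset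
  refine ⟨fun x y => (x, y) ∈ F, fun x y hxy => hFA hxy, ?_, ?_⟩
  · exact isCompleteColoring_iff_surjOn.mpr ⟨hsurj, hF.surjOn⟩
  · exact hF.ncard_eq.trans (ncard_offDiag_univ_fin k)

theorem IsCompleteColoring.mul_pred_le_ncard_arcSet (hc : IsCompleteColoring A c)
    (hA : (arcSet A).Finite) : k * (k - 1) ≤ (arcSet A).ncard := by
  obtain ⟨B, hBA, -, hB⟩ := hc.exists_le_ncard_arcSet_eq
  exact hB ▸ Set.ncard_le_ncard (arcSet_mono hBA) hA

end Coloring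

section Diachromatic

variable {V : Type*} {A : V → V → Prop} {k : ℕ}

theorem bddAbove_acyclic_complete_colorings (hA : (arcSet A).Finite) :
    BddAbove {k | ∃ c : V → Fin k, IsAcyclicColoring A c ∧ IsCompleteColoring A c} := by
  refine ⟨(arcSet A).ncard + 1, ?_⟩
  rintro k ⟨c, -, hc⟩
  have hle : k * (k - 1) ≤ (arcSet A).ncard := hc.mul_pred_le_ncard_arcSet hA
  rcases k.eq_zero_or_pos with rfl | hk
  · exact Nat.zero_le _
  · have : k - 1 ≤ k * (k - 1) := Nat.le_mul_of_pos_left _ hk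
    lia

theorem le_dac {c : V → Fin k} (hA : (arcSet A).Finite) (hac : IsAcyclicColoring A c)
    (hc : IsCompleteColoring A c) : k ≤ dac A :=
  le_csSup (bddAbove_acyclic_complete_colorings hA) ⟨c, hac, hc⟩

theorem exists_coloring_of_dac_pos (hA : (arcSet A).Finite) (hpos : 0 < dac A) :
    ∃ c : V → Fin (dac A), IsAcyclicColoring A c ∧ IsCompleteColoring A c := by
  refine Nat.sSup_mem (Set.nonempty_iff_ne_empty.mpr fun hempty => ?_)
    (bddAbove_acyclic_complete_colorings hA)
  rw [dac, hempty, csSup_empty] at hpos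
  exact hpos.false

theorem exists_le_ncard_arcSet_eq_and_dac_le (hA : (arcSet A).Finite) :
    ∃ B ≤ A, (arcSet B).ncard = dac A * (dac A - 1) ∧ ∀ C, B ≤ C → C ≤ A → dac A ≤ dac C := by
  rcases (dac A).eq_zero_or_pos with hzero | hpos
  -- There need not be any coloring here: `dac A = 0` may be the junk value `sSup ∅`.
  · refine ⟨⊥, bot_le, ?_, fun C _ _ => hzero ▸ Nat.zero_le _⟩
    have hbot : arcSet (⊥ : V → V → Prop) = ∅ := rfl
    rw [hzero, hbot, Set.ncard_empty, zero_mul]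
  · obtain ⟨c, hac, hc⟩ := exists_coloring_of_dac_pos hA hpos
    obtain ⟨B, hBA, hcB, hB⟩ := hc.exists_le_ncard_arcSet_eq
    exact ⟨B, hBA, hB, fun C hBC hCA =>
      le_dac (hA.subset (arcSet_mono hCA)) (hac.anti hCA) (hcB.mono hBC)⟩

theorem dac_mul_pred_le_ncard_arcSet (hA : (arcSet A).Finite) :
    dac A * (dac A - 1) ≤ (arcSet A).ncard := by
  obtain ⟨B, hBA, hB, -⟩ := exists_le_ncard_arcSet_eq_and_dac_le hA
  exact hB ▸ Set.ncard_le_ncard (arcSet_mono hBA) hA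

end Diachromatic

theorem stmt7_general {V : Type*} (A : V → V → Prop) (_hirr : ∀ v : V, ¬A v v)
    (hA : (arcSet A).Finite) (k : ℕ) (hk : dac A = k) :
    (∀ u v : V, A u v → dac (deleteArc A u v) < k) ↔ (arcSet A).ncard = k * (k - 1) := by
  subst hk
  constructor
  · intro hmin
    obtain ⟨B, hBA, hB, hdac⟩ := exists_le_ncard_arcSet_eq_and_dac_le hA
    have hAB : A ≤ B := by
      intro u v huv
      by_contra hnB
      exact (hmin u v huv).not_ge (hdac _ (le_deleteArc hBA hnB) deleteArc_le)
    exact le_antisymm hBA hAB ▸ hB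
  · intro hcard u v huv
    by_contra! hle
    have hlt : (arcSet (deleteArc A u v)).ncard < dac A * (dac A - 1) :=
      hcard ▸ ncard_arcSet_deleteArc_lt hA huv
    have hfin : (arcSet (deleteArc A u v)).Finite := hA.subset (arcSet_mono deleteArc_le)
    have hmul := Nat.mul_le_mul hle (Nat.sub_le_sub_right hle 1)
    exact ((hmul.trans (dac_mul_pred_le_ncard_arcSet hfin)).trans_lt hlt).false

/-- A digraph `D` with diachromatic number `k` is `k`-minimal (deleting any arc
decreases the diachromatic number below `k`) if and only if its size is `k(k-1)`. -/
theorem stmt7 {V : Type*} [Fintype V] (A : V → V → Prop)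
    (hirr : ∀ v : V, ¬ A v v) (k : ℕ) (hk : dac A = k) :
    (∀ u v : V, A u v →
        dac (fun x y : V => A x y ∧ ¬(x = u ∧ y = v)) < k) ↔
      Nat.card {p : V × V // A p.1 p.2} = k * (k - 1) := by
  exact stmt7_general A hirr (Set.toFinite _) k hk
end

section
/- Every tournament T of order n ≥ 3 has a discordant transitive subtournament of order at most 2·log₂((2n+2)/3); that is, Ξ₂(T) ≤ 2·log₂((2n+2)/3). -/
/-!
Call a vertex a dominator of `S` if it has an arc to every vertex of `S`; then `S` is discordant
once it has no dominators, neither in the tournament nor in its reversal. Every nonempty finite set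
`X` contains a vertex dominated by fewer than half of `X`, so choosing such vertices greedily gives
an acyclic `D ⊆ X` with at most `log₂ (|X| + 1)` vertices and no dominator in `X`. Taking for `X`
the dominators of an acyclic `S`, and then doing the same in the reversal, enlarges `S` to a
discordant acyclic set at the cost of a factor `(a + 1) * (b + 1)` in `2 ^ |S|`, where `a` and `b`
count the dominators of `S` in the two directions. Among any three vertices one is the middle of a
directed path through the other two, so by averaging some pair `u, v` has at least `(n - 2) / 3`
vertices in the middle; for `S = {u, v}` this leaves `a + b ≤ 2 * (n - 2) / 3`.
-/

open Finset

section Digraph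

variable {V : Type*} {A : V → V → Prop}

protected theorem AcyclicSet.flip {S : Set V} (hS : AcyclicSet A S) : AcyclicSet (flip A) S := by
  intro v hv
  refine hS v (Relation.transGen_swap.1 (hv.lift id ?_))
  exact fun _ _ ⟨hx, hy, hxy⟩ => ⟨hy, hx, hxy⟩

theorem acyclicSet_of_forall_not_adj {S : Set V} (h : ∀ x ∈ S, ∀ y ∈ S, ¬ A x y) :
    AcyclicSet A S := by
  intro v hv
  obtain ⟨w, ⟨hvS, hwS, hvw⟩, -⟩ := Relation.TransGen.head'_iff.1 hv
  exact h v hvS w hwS hvw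

theorem AcyclicSet.union {S T : Set V} (hS : AcyclicSet A S) (hT : AcyclicSet A T)
    (hTS : ∀ t ∈ T, ∀ s ∈ S, ¬ A t s) : AcyclicSet A (S ∪ T) := by
  have stays_in_T {a b : V} (ha : a ∈ T)
      (hab : Relation.TransGen (fun x y => x ∈ S ∪ T ∧ y ∈ S ∪ T ∧ A x y) a b) :
      b ∈ T ∧ Relation.TransGen (fun x y => x ∈ T ∧ y ∈ T ∧ A x y) a b := by
    induction hab with
    | single h =>
      have hb := h.2.1.resolve_left fun hbS => hTS _ ha _ hbS h.2.2
      exact ⟨hb, .single ⟨ha, hb, h.2.2⟩⟩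
    | tail _ h ih =>
      have hc := h.2.1.resolve_left fun hcS => hTS _ ih.1 _ hcS h.2.2
      exact ⟨hc, ih.2.tail ⟨ih.1, hc, h.2.2⟩⟩
  have stays_in_S {a b : V} (hb : b ∉ T)
      (hab : Relation.TransGen (fun x y => x ∈ S ∪ T ∧ y ∈ S ∪ T ∧ A x y) a b) :
      Relation.TransGen (fun x y => x ∈ S ∧ y ∈ S ∧ A x y) a b := by
    induction hab with
    | single h =>
      have ha := fun haT => hb (stays_in_T haT (.single h)).1
      exact .single ⟨h.1.resolve_right ha, h.2.1.resolve_right hb, h.2.2⟩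
    | tail _ h ih =>
      have hb' := fun hbT => hb (stays_in_T hbT (.single h)).1
      exact (ih hb').tail ⟨h.1.resolve_right hb', h.2.1.resolve_right hb, h.2.2⟩
  intro v hv
  by_cases hvT : v ∈ T
  · exact hT v (stays_in_T hvT hv).2
  · exact hS v (stays_in_S hvT hv)

/-- A set `S` of vertices is discordant in the digraph `A` if every vertex outside `S` has both an
out-neighbour and an in-neighbour in `S`. -/
def IsDiscordant (A : V → V → Prop) (S : Finset V) : Prop :=
  ∀ x : V, x ∉ S → ∃ z ∈ S, ∃ w ∈ S, A x z ∧ A w x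

open scoped Classical in
/-- The dominators of `S` in the digraph `A`: the common in-neighbours of the vertices of `S`. The
common out-neighbours are `dominators (flip A) S`. -/
noncomputable def dominators [Fintype V] (A : V → V → Prop) (S : Finset V) : Finset V :=
  {x | ∀ s ∈ S, A x s}

@[simp]
theorem mem_dominators [Fintype V] {S : Finset V} {x : V} :
    x ∈ dominators A S ↔ ∀ s ∈ S, A x s := by
  simp [dominators]

theorem dominators_anti [Fintype V] {S T : Finset V} (h : S ⊆ T) :
    dominators A T ⊆ dominators A S := by
  intro x hx
  rw [mem_dominators] at hx ⊢
  exact fun s hs => hx s (h hs)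

end Digraph

section Averaging

theorem sum_sum_sum_rotate {α β γ M : Type*} [Fintype α] [Fintype β] [Fintype γ] [AddCommMonoid M]
    (f : α → β → γ → M) : ∑ w, ∑ u, ∑ v, f u v w = ∑ u, ∑ v, ∑ w, f u v w := by
  rw [sum_comm]
  exact sum_congr rfl fun u _ => sum_comm

theorem exists_ne_card_le_three_mul_card_filter_add_two {V : Type*} [Fintype V] [Nontrivial V]
    {b : V → V → V → Prop} [∀ u v w, Decidable (b u v w)]
    (hb : ∀ u v w, u ≠ v → v ≠ w → w ≠ u → b u v w ∨ b v w u ∨ b w u v) :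
    ∃ u v, u ≠ v ∧ Fintype.card V ≤ 3 * #{w | b u v w} + 2 := by
  classical
  by_contra! hlt
  let triple (u v w : V) : ℕ := if u ≠ v ∧ v ≠ w ∧ w ≠ u then 1 else 0
  let hit (u v w : V) : ℕ := if u ≠ v ∧ b u v w then 1 else 0
  have sum_triple_le : ∑ u, ∑ v, ∑ w, triple u v w ≤ 3 * ∑ u, ∑ v, ∑ w, hit u v w :=
    calc ∑ u, ∑ v, ∑ w, triple u v w
      _ ≤ ∑ u, ∑ v, ∑ w, (hit u v w + hit v w u + hit w u v) := by
        gcongr with u _ v _ w _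
        grind
      _ = 3 * ∑ u, ∑ v, ∑ w, hit u v w := by
        have rotate_twice := sum_sum_sum_rotate fun u v w => hit v w u
        simp only [sum_add_distrib, sum_sum_sum_rotate hit] at rotate_twice ⊢
        omega
  have sum_lt {u v : V} (huv : u ≠ v) : 3 * ∑ w, hit u v w < ∑ w, triple u v w := by
    have card_triple : ∑ w, triple u v w + 2 = Fintype.card V := by
      have hcompl : ({w | u ≠ v ∧ v ≠ w ∧ w ≠ u} : Finset V) = univ \ {u, v} := by grind
      rw [sum_boole, Nat.cast_id, hcompl, ← card_pair huv,
        card_sdiff_add_card_eq_card (subset_univ _), card_univ]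
    have card_hit : ∑ w, hit u v w = #{w | b u v w} := by simp [hit, huv]
    have := hlt u v huv
    omega
  have sum_le (u v : V) : 3 * ∑ w, hit u v w ≤ ∑ w, triple u v w := by
    rcases eq_or_ne u v with rfl | huv
    · simp [hit]
    · exact (sum_lt huv).le
  obtain ⟨u, v, huv⟩ := exists_pair_ne V
  refine sum_triple_le.not_gt ?_
  simp only [mul_sum] at sum_lt sum_le ⊢
  exact sum_lt_sum (fun u _ => sum_le_sum fun v _ => sum_le u v)
    ⟨u, mem_univ u, sum_lt_sum (fun v _ => sum_le u v) ⟨v, mem_univ v, sum_lt huv⟩⟩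

end Averaging

namespace IsTournament

variable {V : Type*} {A : V → V → Prop}

protected theorem flip (hA : IsTournament A) : IsTournament (flip A) :=
  ⟨hA.1, fun u v h => hA.2 v u h.symm⟩

theorem not_adj_iff (hA : IsTournament A) {u v : V} (h : u ≠ v) : ¬ A u v ↔ A v u :=
  (hA.2 v u h.symm).symm

theorem asymm (hA : IsTournament A) {u v : V} (h : A u v) : ¬ A v u := by
  rcases eq_or_ne u v with rfl | huv
  · exact hA.1 u
  · exact (hA.2 u v huv).1 h

theorem acyclicSet_singleton (hA : IsTournament A) (v : V) : AcyclicSet A {v} :=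
  acyclicSet_of_forall_not_adj (by simpa using hA.1 v)

theorem acyclicSet_pair (hA : IsTournament A) (u v : V) : AcyclicSet A {u, v} := by
  wlog h : ¬ A v u generalizing u v
  · rw [Set.pair_comm]
    exact this v u (hA.asymm (not_not.1 h))
  exact (hA.acyclicSet_singleton u).union (hA.acyclicSet_singleton v) (by simpa using h)

theorem card_filter_in_add_card_filter_out_add_one [DecidableRel A] (hA : IsTournament A)
    {X : Finset V} {x : V} (hx : x ∈ X) : #{y ∈ X | A y x} + #{y ∈ X | A x y} + 1 = #X := by
  classical
  have hdisj : Disjoint {y ∈ X | A y x} {y ∈ X | A x y} :=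
    disjoint_filter.2 fun _ _ h => hA.asymm h
  have hunion : {y ∈ X | A y x} ∪ {y ∈ X | A x y} = X.erase x := by
    ext y
    have := hA.1 x
    have := hA.2 x y
    grind
  rw [← card_union_of_disjoint hdisj, hunion, card_erase_add_one hx]

theorem exists_two_mul_card_filter_in_lt [DecidableRel A] (hA : IsTournament A) {X : Finset V}
    (hX : X.Nonempty) : ∃ x ∈ X, 2 * #{y ∈ X | A y x} < #X := by
  refine exists_lt_of_sum_lt ?_
  have sum_in_eq_sum_out : ∑ x ∈ X, #{y ∈ X | A y x} = ∑ x ∈ X, #{y ∈ X | A x y} :=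
    (sum_card_bipartiteAbove_eq_sum_card_bipartiteBelow A).symm
  calc ∑ x ∈ X, 2 * #{y ∈ X | A y x}
    _ = ∑ x ∈ X, (#{y ∈ X | A y x} + #{y ∈ X | A x y}) := by
      rw [← mul_sum, sum_add_distrib, ← sum_in_eq_sum_out, two_mul]
    _ < ∑ _ ∈ X, #X := sum_lt_sum_of_nonempty hX fun x hx => by
      have := hA.card_filter_in_add_card_filter_out_add_one hx
      omega

theorem exists_acyclicSet_subset_not_dominated (hA : IsTournament A) (X : Finset V) :
    ∃ D ⊆ X, AcyclicSet A D ∧ (∀ x ∈ X, ∃ d ∈ D, ¬ A x d) ∧ 2 ^ #D ≤ #X + 1 := by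
  classical
  induction X using Finset.strongInduction with
  | H X ih =>
    rcases X.eq_empty_or_nonempty with rfl | hX
    · exact ⟨∅, subset_rfl, acyclicSet_of_forall_not_adj (by simp), by simp, by simp⟩
    obtain ⟨x, hx, hlt⟩ := hA.exists_two_mul_card_filter_in_lt hX
    obtain ⟨D, hDX, hD, hDdom, hDcard⟩ :=
      ih {y ∈ X | A y x} (filter_ssubset.2 ⟨x, hx, hA.1 x⟩)
    have hDx : ∀ d ∈ D, A d x := fun d hd => (mem_filter.1 (hDX hd)).2
    refine ⟨insert x D, ?_, ?_, fun y hy => ?_, ?_⟩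
    · exact insert_subset hx (hDX.trans (filter_subset _ _))
    · rw [coe_insert, Set.insert_eq, Set.union_comm]
      refine hD.union (hA.acyclicSet_singleton x) ?_
      rintro _ rfl d hd
      exact hA.asymm (hDx d hd)
    · by_cases hyx : A y x
      · obtain ⟨d, hd, hyd⟩ := hDdom y (mem_filter.2 ⟨hy, hyx⟩)
        exact ⟨d, mem_insert_of_mem hd, hyd⟩
      · exact ⟨x, mem_insert_self x D, hyx⟩
    · calc 2 ^ #(insert x D)
        _ ≤ 2 ^ (#D + 1) := by gcongr; exacts [one_le_two, card_insert_le x D]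
        _ ≤ #X + 1 := by rw [pow_succ]; omega

variable [Fintype V]

theorem isDiscordant_of_dominators_eq_empty (hA : IsTournament A) {S : Finset V}
    (hin : dominators A S = ∅) (hout : dominators (flip A) S = ∅) : IsDiscordant A S := by
  intro x hx
  have hne {s : V} (hs : s ∈ S) : x ≠ s := by
    rintro rfl
    exact hx hs
  have hxin : x ∉ dominators A S := by simp [hin]
  have hxout : x ∉ dominators (flip A) S := by simp [hout]
  simp only [mem_dominators, not_forall, exists_prop] at hxin hxout
  obtain ⟨w, hw, hxw⟩ := hxin
  obtain ⟨z, hz, hzx⟩ := hxout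
  exact ⟨z, hz, w, hw, (hA.not_adj_iff (hne hz).symm).1 hzx, (hA.not_adj_iff (hne hw)).1 hxw⟩

theorem exists_acyclicSet_superset_dominators_eq_empty (hA : IsTournament A) {S : Finset V}
    (hS : AcyclicSet A S) :
    ∃ T, S ⊆ T ∧ AcyclicSet A T ∧ dominators A T = ∅ ∧
      2 ^ #T ≤ 2 ^ #S * (#(dominators A S) + 1) := by
  classical
  obtain ⟨D, hDS, hD, hDdom, hDcard⟩ :=
    hA.exists_acyclicSet_subset_not_dominated (dominators A S)
  refine ⟨D ∪ S, subset_union_right, ?_, ?_, ?_⟩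
  · rw [coe_union]
    exact hD.union hS fun s hs d hd => hA.asymm (mem_dominators.1 (hDS hd) s hs)
  · refine eq_empty_of_forall_notMem fun x hx => ?_
    obtain ⟨d, hd, hxd⟩ := hDdom x (dominators_anti subset_union_right hx)
    exact hxd (mem_dominators.1 hx d (mem_union_left S hd))
  · calc 2 ^ #(D ∪ S)
      _ ≤ 2 ^ (#D + #S) := by gcongr; exacts [one_le_two, card_union_le D S]
      _ = 2 ^ #S * 2 ^ #D := by rw [pow_add, mul_comm]
      _ ≤ 2 ^ #S * (#(dominators A S) + 1) := by gcongr

theorem exists_isDiscordant_superset (hA : IsTournament A) {S : Finset V} (hS : AcyclicSet A S) :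
    ∃ T, S ⊆ T ∧ AcyclicSet A T ∧ IsDiscordant A T ∧
      2 ^ #T ≤ 2 ^ #S * ((#(dominators A S) + 1) * (#(dominators (flip A) S) + 1)) := by
  obtain ⟨R, hSR, hR, hRin, hRcard⟩ := hA.exists_acyclicSet_superset_dominators_eq_empty hS
  obtain ⟨T, hRT, hT, hTout, hTcard⟩ :=
    hA.flip.exists_acyclicSet_superset_dominators_eq_empty hR.flip
  have hTin : dominators A T = ∅ := subset_empty.1 (hRin ▸ dominators_anti hRT)
  refine ⟨T, hSR.trans hRT, hT.flip, hA.isDiscordant_of_dominators_eq_empty hTin hTout, ?_⟩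
  calc 2 ^ #T
    _ ≤ 2 ^ #R * (#(dominators (flip A) R) + 1) := hTcard
    _ ≤ 2 ^ #S * (#(dominators A S) + 1) * (#(dominators (flip A) S) + 1) := by
      gcongr
      exact dominators_anti hSR
    _ = _ := mul_assoc ..

theorem card_dominators_pair_add_card_between [DecidableEq V] [DecidableRel A]
    (hA : IsTournament A) {u v : V} (huv : u ≠ v) :
    #(dominators A {u, v}) + #(dominators (flip A) {u, v}) +
      #{w | A u w ∧ A w v ∨ A v w ∧ A w u} + 2 = Fintype.card V := by
  have hcompl : dominators A {u, v} ∪ dominators (flip A) {u, v} ∪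
      ({w | A u w ∧ A w v ∨ A v w ∧ A w u} : Finset V) = univ \ {u, v} := by
    ext w
    have := hA.1 w
    have := hA.2 u w
    have := hA.2 v w
    simp only [mem_union, mem_dominators, mem_filter, mem_univ, true_and, mem_sdiff, mem_insert,
      mem_singleton, flip, forall_eq_or_imp, forall_eq]
    grind
  have hdisj : Disjoint (dominators A {u, v}) (dominators (flip A) {u, v}) := by
    refine disjoint_left.2 fun w hin hout => hA.asymm (u := w) (v := u) ?_ ?_
    · exact mem_dominators.1 hin u (mem_insert_self u _)
    · exact mem_dominators.1 hout u (mem_insert_self u _)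
  have hdisj' : Disjoint (dominators A {u, v} ∪ dominators (flip A) {u, v})
      ({w | A u w ∧ A w v ∨ A v w ∧ A w u} : Finset V) := by
    simp only [disjoint_left, mem_dominators, mem_union, mem_filter, mem_univ, true_and, flip,
      forall_mem_insert, mem_singleton, forall_eq]
    grind [hA.asymm]
  rw [← card_union_of_disjoint hdisj, ← card_union_of_disjoint hdisj', hcompl, ← card_pair huv,
    card_sdiff_add_card_eq_card (subset_univ _), card_univ]

theorem exists_pair_card_dominators_le [Nontrivial V] [DecidableEq V] (hA : IsTournament A) :
    ∃ u v, u ≠ v ∧ 3 * (#(dominators A {u, v}) + #(dominators (flip A) {u, v})) + 4 ≤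
      2 * Fintype.card V := by
  classical
  obtain ⟨u, v, huv, hbetween⟩ :=
    exists_ne_card_le_three_mul_card_filter_add_two
      (b := fun u v w => A u w ∧ A w v ∨ A v w ∧ A w u) fun u v w huv hvw hwu => by
        have := hA.2 u v huv
        have := hA.2 v w hvw
        have := hA.2 w u hwu
        tauto
  have := hA.card_dominators_pair_add_card_between huv
  exact ⟨u, v, huv, by omega⟩

theorem exists_isDiscordant_two_pow_card_le [Nontrivial V] (hA : IsTournament A) :
    ∃ S : Finset V, AcyclicSet A S ∧ IsDiscordant A S ∧
      9 * 2 ^ #S ≤ (2 * Fintype.card V + 2) ^ 2 := by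
  classical
  obtain ⟨u, v, huv, hab⟩ := hA.exists_pair_card_dominators_le
  set a := #(dominators A {u, v})
  set b := #(dominators (flip A) {u, v})
  obtain ⟨S, -, hS, hdisc, hcard⟩ :=
    hA.exists_isDiscordant_superset (S := {u, v}) (by simpa using hA.acyclicSet_pair u v)
  refine ⟨S, hS, hdisc, ?_⟩
  calc 9 * 2 ^ #S
    _ ≤ 9 * (2 ^ 2 * ((a + 1) * (b + 1))) := by
      rw [card_pair huv] at hcard
      gcongr
    _ = 9 * (4 * (a + 1) * (b + 1)) := by ring
    _ ≤ 9 * ((a + 1) + (b + 1)) ^ 2 := by gcongr; exact four_mul_le_sq_add ..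
    _ = (3 * (a + b) + 6) ^ 2 := by ring
    _ ≤ (2 * Fintype.card V + 2) ^ 2 := Nat.pow_le_pow_left (by omega) 2

end IsTournament

/-- Every tournament `T` of order `n ≥ 3` has a discordant transitive subtournament
of order at most `2·log₂((2n+2)/3)`; that is, `Ξ₂(T) ≤ 2·log₂((2n+2)/3)`. -/
theorem stmt8 {V : Type*} [Fintype V] (A : V → V → Prop)
    (hT : IsTournament A) (hn : 3 ≤ Fintype.card V) :
    ∃ S : Finset V, AcyclicSet A (S : Set V) ∧
      (∀ x : V, x ∉ S → ∃ z ∈ S, ∃ w ∈ S, A x z ∧ A w x) ∧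
      (S.card : ℝ) ≤ 2 * Real.logb 2 ((2 * (Fintype.card V : ℝ) + 2) / 3) := by
  have : Nontrivial V := Fintype.one_lt_card_iff_nontrivial.1 (by omega)
  obtain ⟨S, hS, hdisc, hcard⟩ := hT.exists_isDiscordant_two_pow_card_le
  refine ⟨S, hS, hdisc, ?_⟩
  have hpow : (2 : ℝ) ^ S.card ≤ ((2 * (Fintype.card V : ℝ) + 2) / 3) ^ 2 := by
    rw [div_pow, le_div_iff₀' (by norm_num)]
    exact_mod_cast hcard
  calc (S.card : ℝ)
    _ = Real.logb 2 (2 ^ S.card) := by simp [Real.logb_pow]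
    _ ≤ Real.logb 2 (((2 * (Fintype.card V : ℝ) + 2) / 3) ^ 2) :=
      Real.logb_le_logb_of_le one_lt_two (by positivity) hpow
    _ = 2 * Real.logb 2 ((2 * (Fintype.card V : ℝ) + 2) / 3) := by
      rw [Real.logb_pow, Nat.cast_ofNat]
end
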